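/- arXiv:1508.04439 — 2 statements merged into one kernel-verified Lean document; each statement's English description precedes it below -/
import Mathlib

section
/- Let α ∈ [0,1] and let m : ℕ → ℕ satisfy m(n) < n for all n and m(n)/n → α as n → ∞. Then the limit superior as n → ∞ of Z(n, m(n))/n² is at least α². -/
/-!
For `m < n` one has `m² ≤ Z(n, m) ≤ n²`, and the lower bound gives the claim.

*Upper bound.* On a finite set `S` of zeros of `p + conj q`, the coordinate functions `x = z` and
`y = conj z` satisfy two equations which express `x ^ n` and `y ^ n` through monomials of lower
total degree. So the `n²` monomials `x ^ i * y ^ j` with `i, j < n` span the algebra generated by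
`x` and `y`, which by Lagrange interpolation consists of all functions on `S`.

*Lower bound.* The real part of `c (z - a) ^ m`, `c ≠ 0`, vanishes on `m` equally spaced lines
through `a`. Two such pencils, through `0` and `1` and without common directions, meet in `m²`
points. These are zeros of a harmonic polynomial of degree `m`, the two real parts being its real
and imaginary part. As the lines cross transversally, the zeros are nondegenerate and survive a
small perturbation by `t z ^ n`, which raises the degree of the analytic part to `n`.
-/

open Polynomial

/-- `Znm n m` is the maximal possible number of zeros of a harmonic polynomial
`p + conj ∘ q` with `deg p = n` and `deg q = m`. -/
noncomputable def Znm (n m : ℕ) : ℕ :=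
  sSup {k : ℕ | ∃ p q : Polynomial ℂ, p.natDegree = n ∧ q.natDegree = m ∧
    k = {z : ℂ | p.eval z + (starRingEnd ℂ) (q.eval z) = 0}.ncard}

section

open Complex Filter Set
open scoped ComplexConjugate Topology Real

/-! ### A Bézout-type bound -/

section Bezout

variable {K A : Type*} [Field K] [CommRing A] [Algebra K A]

lemma aeval_mul_mem {V : Submodule K A} {x b : A} {p : K[X]}
    (h : ∀ k ∈ p.support, x ^ k * b ∈ V) : aeval x p * b ∈ V := by
  rw [aeval_def, eval₂_eq_sum, Polynomial.sum_def, Finset.sum_mul]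
  refine V.sum_mem fun k hk => ?_
  rw [mul_assoc, ← Algebra.smul_def]
  exact V.smul_mem _ (h k hk)

lemma pow_natDegree_mul_mem {V : Submodule K A} {x y b : A} {p q : K[X]}
    (hxy : aeval x p = aeval y q) (hqp : q.natDegree < p.natDegree)
    (hx : ∀ k < p.natDegree, x ^ k * b ∈ V) (hy : ∀ k < p.natDegree, y ^ k * b ∈ V) :
    x ^ p.natDegree * b ∈ V := by
  have hsplit : aeval x p = aeval x p.eraseLead + p.leadingCoeff • x ^ p.natDegree := by
    conv_lhs => rw [← p.eraseLead_add_C_mul_X_pow]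
    simp only [map_add, map_mul, map_pow, aeval_C, aeval_X, Algebra.smul_def]
  have hlead : p.leadingCoeff • (x ^ p.natDegree * b) =
      aeval y q * b - aeval x p.eraseLead * b := by
    rw [← hxy, hsplit, add_mul, smul_mul_assoc, add_sub_cancel_left]
  rw [← V.smul_mem_iff (leadingCoeff_ne_zero.2 (ne_zero_of_natDegree_gt hqp)), hlead]
  exact V.sub_mem
    (aeval_mul_mem fun k hk => hy k ((le_natDegree_of_mem_supp k hk).trans_lt hqp))
    (aeval_mul_mem fun k hk => hx k (lt_natDegree_of_mem_eraseLead_support hk))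

variable {x y : A} {p₁ q₁ p₂ q₂ : K[X]}

lemma pow_mul_pow_mem_span (h₁ : aeval x p₁ = aeval y q₁) (hd₁ : q₁.natDegree < p₁.natDegree)
    (h₂ : aeval y p₂ = aeval x q₂) (hd₂ : q₂.natDegree < p₂.natDegree) (i j : ℕ) :
    x ^ i * y ^ j ∈ Submodule.span K
      (range fun e : Fin p₁.natDegree × Fin p₂.natDegree => x ^ (e.1 : ℕ) * y ^ (e.2 : ℕ)) := by
  set V := Submodule.span K
    (range fun e : Fin p₁.natDegree × Fin p₂.natDegree => x ^ (e.1 : ℕ) * y ^ (e.2 : ℕ))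
  induction hd : i + j using Nat.strong_induction_on generalizing i j with
  | _ d ih =>
    have lower (k l : ℕ) (hkl : k + l < d) : x ^ k * y ^ l ∈ V := ih _ hkl k l rfl
    by_cases hi : p₁.natDegree ≤ i
    · obtain ⟨i, rfl⟩ := Nat.exists_eq_add_of_le hi
      rw [pow_add, mul_assoc]
      refine pow_natDegree_mul_mem h₁ hd₁ (fun k hk => ?_) fun k hk => ?_
      · rw [← mul_assoc, ← pow_add]
        exact lower _ _ (by omega)
      · rw [mul_left_comm, ← pow_add]
        exact lower _ _ (by omega)
    by_cases hj : p₂.natDegree ≤ j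
    · obtain ⟨j, rfl⟩ := Nat.exists_eq_add_of_le hj
      rw [pow_add, mul_left_comm]
      refine pow_natDegree_mul_mem h₂ hd₂ (fun k hk => ?_) fun k hk => ?_
      · rw [mul_left_comm, ← pow_add]
        exact lower _ _ (by omega)
      · rw [← mul_assoc, ← pow_add]
        exact lower _ _ (by omega)
    exact Submodule.subset_span ⟨(⟨i, not_le.1 hi⟩, ⟨j, not_le.1 hj⟩), rfl⟩

theorem finrank_adjoin_pair_le (h₁ : aeval x p₁ = aeval y q₁) (hd₁ : q₁.natDegree < p₁.natDegree)
    (h₂ : aeval y p₂ = aeval x q₂) (hd₂ : q₂.natDegree < p₂.natDegree) :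
    Module.finrank K (Algebra.adjoin K {x, y}) ≤ p₁.natDegree * p₂.natDegree := by
  have hspan : Subalgebra.toSubmodule (Algebra.adjoin K {x, y}) = Submodule.span K
      (range fun e : Fin p₁.natDegree × Fin p₂.natDegree => x ^ (e.1 : ℕ) * y ^ (e.2 : ℕ)) := by
    rw [Algebra.adjoin_eq_span]
    refine le_antisymm (Submodule.span_le.2 fun a ha => ?_) (Submodule.span_mono ?_)
    · obtain ⟨i, j, rfl⟩ := (Submonoid.mem_closure_pair x y a).1 ha
      exact pow_mul_pow_mem_span h₁ hd₁ h₂ hd₂ i j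
    · rintro _ ⟨e, rfl⟩
      exact (Submonoid.mem_closure_pair x y _).2 ⟨e.1, e.2, rfl⟩
  rw [← Subalgebra.finrank_toSubmodule, hspan]
  exact (finrank_range_le_card _).trans_eq (by simp)

end Bezout

lemma adjoin_singleton_eq_top_of_injective {ι K : Type*} [Finite ι] [Field K] {v : ι → K}
    (hv : Function.Injective v) : Algebra.adjoin K {v} = ⊤ := by
  classical
  have := Fintype.ofFinite ι
  refine eq_top_iff.2 fun f _ => ?_
  have hf : aeval v (Lagrange.interpolate Finset.univ v f) = f := by
    ext i
    rw [aeval_fn_apply, coe_aeval_eq_eval,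
      Lagrange.eval_interpolate_at_node f hv.injOn (Finset.mem_univ i)]
  exact hf ▸ aeval_mem_adjoin_singleton K v

/-! ### Zeros of harmonic polynomials -/

/-- The zero set of the harmonic polynomial `p + conj q`. -/
def harmonicZeros (p q : ℂ[X]) : Set ℂ :=
  {z | p.eval z + conj (q.eval z) = 0}

/-- The zeros of `p + conj q` at which the Jacobian determinant `‖p'‖ ^ 2 - ‖q'‖ ^ 2` of this map of
the plane does not vanish. -/
def nondegenerateZeros (p q : ℂ[X]) : Set ℂ :=
  {z ∈ harmonicZeros p q | ‖p.derivative.eval z‖ ≠ ‖q.derivative.eval z‖}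

lemma card_le_sq_natDegree {p q : ℂ[X]} (hqp : q.natDegree < p.natDegree) {S : Finset ℂ}
    (hS : ↑S ⊆ harmonicZeros p q) : S.card ≤ p.natDegree ^ 2 := by
  let x : S → ℂ := fun s => s
  let y : S → ℂ := fun s => conj (s : ℂ)
  have heq (s : S) : p.eval (s : ℂ) + conj (q.eval (s : ℂ)) = 0 := hS s.2
  have hx : aeval x p = aeval y (-q.map (starRingEnd ℂ)) := by
    ext s
    simpa [x, y, aeval_fn_apply, eval_map_apply] using eq_neg_of_add_eq_zero_left (heq s)
  have hy : aeval y (p.map (starRingEnd ℂ)) = aeval x (-q) := by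
    ext s
    have := congrArg conj (eq_neg_of_add_eq_zero_left (heq s))
    simpa [x, y, aeval_fn_apply, eval_map_apply] using this
  have hbound := finrank_adjoin_pair_le hx (by simpa using hqp) hy (by simpa using hqp)
  have htop : Algebra.adjoin ℂ {x, y} = ⊤ := top_le_iff.1 <|
    (adjoin_singleton_eq_top_of_injective (v := x) Subtype.val_injective).ge.trans
      (Algebra.adjoin_mono (by simp))
  rw [htop, subalgebra_top_finrank_eq_submodule_top_finrank, finrank_top,
    Module.finrank_fintype_fun_eq_card] at hbound
  simpa [sq] using hbound

theorem encard_harmonicZeros_le {p q : ℂ[X]} (hqp : q.natDegree < p.natDegree) :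
    (harmonicZeros p q).encard ≤ (p.natDegree ^ 2 : ℕ) := by
  by_contra! h
  obtain ⟨S, hS, hcard⟩ := exists_subset_encard_eq (Order.add_one_le_of_lt h)
  have hfin : S.Finite := finite_of_encard_eq_coe (k := p.natDegree ^ 2 + 1) hcard
  lift S to Finset ℂ using hfin
  have hle := card_le_sq_natDegree hqp hS
  rw [encard_coe_eq_coe_finsetCard] at hcard
  norm_cast at hcard
  omega

lemma Znm_le_sq {n m : ℕ} (hmn : m < n) : Znm n m ≤ n ^ 2 := by
  refine csSup_le' ?_
  rintro _ ⟨p, q, rfl, rfl, rfl⟩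
  exact (encard_le_coe_iff_finite_ncard_le.1 (encard_harmonicZeros_le hmn)).2

lemma le_Znm_of_le_encard {p q : ℂ[X]} (hqp : q.natDegree < p.natDegree) {k : ℕ}
    (hk : k ≤ (harmonicZeros p q).encard) : k ≤ Znm p.natDegree q.natDegree := by
  have hfin := (encard_le_coe_iff_finite_ncard_le.1 (encard_harmonicZeros_le hqp)).1
  rw [← hfin.cast_ncard_eq, Nat.cast_le] at hk
  refine hk.trans (le_csSup ⟨p.natDegree ^ 2, ?_⟩ ⟨p, q, rfl, rfl, rfl⟩)
  rintro _ ⟨p', q', hp', hq', rfl⟩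
  rw [← hp', ← hq'] at hqp
  exact hp' ▸ (encard_le_coe_iff_finite_ncard_le.1 (encard_harmonicZeros_le hqp)).2

/-! ### Persistence of nondegenerate zeros -/

lemma isInvertible_of_apply_eq_mul_add_conj {L : ℂ →L[ℝ] ℂ} {α β : ℂ} (h : ‖α‖ ≠ ‖β‖)
    (hL : ∀ v, L v = α * v + conj (β * v)) : L.IsInvertible := by
  have hinj : Function.Injective L := by
    refine (injective_iff_map_eq_zero L).2 fun v hv => ?_
    have hv' : α * v = -conj (β * v) := eq_neg_of_add_eq_zero_left (hL v ▸ hv)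
    have hnorm : ‖α‖ * ‖v‖ = ‖β‖ * ‖v‖ := by simpa using congrArg norm hv'
    by_contra hv0
    exact h (mul_right_cancel₀ (norm_ne_zero_iff.2 hv0) hnorm)
  exact ⟨(LinearEquiv.ofInjectiveEndo L.toLinearMap hinj).toContinuousLinearEquiv, rfl⟩

lemma exists_hasStrictFDerivAt_perturbation (p q g : ℂ[X]) (z : ℂ) :
    ∃ F' : ℂ × ℂ →L[ℝ] ℂ,
      HasStrictFDerivAt (fun u : ℂ × ℂ => p.eval u.2 + u.1 * g.eval u.2 + conj (q.eval u.2)) F'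
        (0, z) ∧
      ∀ v, F' (0, v) = p.derivative.eval z * v + conj (q.derivative.eval z * v) := by
  have hsnd : HasStrictFDerivAt Prod.snd (.snd ℝ ℂ ℂ) ((0 : ℂ), z) := hasStrictFDerivAt_snd
  have hcomp (f : ℂ[X]) :=
    ((f.hasStrictDerivAt z).hasStrictFDerivAt.restrictScalars ℝ).comp ((0 : ℂ), z) hsnd
  refine ⟨_, ((hcomp p).add (hasStrictFDerivAt_fst.mul (hcomp g))).add
    ((conjCLE : ℂ →L[ℝ] ℂ).hasStrictFDerivAt.comp ((0 : ℂ), z) (hcomp q)), fun v => ?_⟩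
  simp [mul_comm]

lemma eventually_nonempty_inter_harmonicZeros {p q : ℂ[X]} {z : ℂ} (hz : z ∈ nondegenerateZeros p q)
    (g : ℂ[X]) {U : Set ℂ} (hU : U ∈ 𝓝 z) :
    ∀ᶠ t in 𝓝 (0 : ℂ), (U ∩ harmonicZeros (p + C t * g) q).Nonempty := by
  obtain ⟨F', hF, hF'⟩ := exists_hasStrictFDerivAt_perturbation p q g z
  have hinv : (F' ∘L .inr ℝ ℂ ℂ).IsInvertible := isInvertible_of_apply_eq_mul_add_conj hz.2 hF'
  filter_upwards [hF.tendsto_implicitFunctionOfProdDomain hinv hU,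
    hF.eventually_apply_implicitFunctionOfProdDomain hinv] with t htU ht
  have hzero : p.eval z + conj (q.eval z) = 0 := hz.1
  refine ⟨_, htU, ?_⟩
  simpa [harmonicZeros, hzero] using ht

theorem eventually_card_le_encard_harmonicZeros {p q : ℂ[X]} {S : Finset ℂ}
    (hS : ↑S ⊆ nondegenerateZeros p q) (g : ℂ[X]) :
    ∀ᶠ t in 𝓝 (0 : ℂ), S.card ≤ (harmonicZeros (p + C t * g) q).encard := by
  obtain ⟨U, hU, hdisj⟩ := S.finite_toSet.t2_separation
  have hev : ∀ᶠ t in 𝓝 (0 : ℂ), ∀ z ∈ S, (U z ∩ harmonicZeros (p + C t * g) q).Nonempty :=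
    (eventually_all_finset S).2 fun z hz =>
      eventually_nonempty_inter_harmonicZeros (hS hz) g ((hU z).2.mem_nhds (hU z).1)
  filter_upwards [hev] with t ht
  choose! f hf using ht
  have hinj : InjOn f S := fun z hz w hw hzw =>
    hdisj.elim_set hz hw (f z) (hf z hz).1 (hzw ▸ (hf w hw).1)
  rw [← encard_coe_eq_coe_finsetCard, ← hinj.encard_image]
  exact encard_le_encard (image_subset_iff.2 fun z hz => (hf z hz).2)

theorem card_le_Znm {n : ℕ} {p q : ℂ[X]} (hp : p.natDegree < n) (hq : q.natDegree < n)
    {S : Finset ℂ} (hS : ↑S ⊆ nondegenerateZeros p q) : S.card ≤ Znm n q.natDegree := by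
  obtain ⟨t, hcard, ht⟩ := (((eventually_card_le_encard_harmonicZeros hS (X ^ n)).filter_mono
    nhdsWithin_le_nhds).and (self_mem_nhdsWithin : ({0}ᶜ : Set ℂ) ∈ 𝓝[≠] 0)).exists
  have hX : (C t * X ^ n : ℂ[X]).natDegree = n := natDegree_C_mul_X_pow n t ht
  have hdeg : (p + C t * X ^ n).natDegree = n := by
    rw [natDegree_add_eq_right_of_natDegree_lt (hp.trans_eq hX.symm), hX]
  simpa only [hdeg] using le_Znm_of_le_encard (hq.trans_eq hdeg.symm) hcard

/-! ### Pencils of lines -/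

/-- The point above the base `[0, 1]` at which the line through `0` at angle `θ` meets the line
through `1` at angle `φ`, both angles being measured from the positive real axis. The formula is the
sine rule; it is meaningful only for non-parallel lines. -/
noncomputable def triangleApex (θ φ : ℝ) : ℂ :=
  (Real.sin φ / Real.sin (φ - θ) : ℝ) * exp (θ * I)

lemma triangleApex_eq_zero_add (θ φ : ℝ) :
    triangleApex θ φ = 0 + (Real.sin φ / Real.sin (φ - θ) : ℝ) * exp (θ * I) :=
  (zero_add _).symm

lemma triangleApex_eq_one_add {θ φ : ℝ} (h : Real.sin (φ - θ) ≠ 0) :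
    triangleApex θ φ = 1 + (Real.sin θ / Real.sin (φ - θ) : ℝ) * exp (φ * I) := by
  rw [triangleApex]
  apply Complex.ext
  · simp only [re_ofReal_mul, add_re, one_re, exp_ofReal_mul_I_re]
    field_simp
    rw [Real.sin_sub]
    ring
  · simp only [im_ofReal_mul, add_im, one_im, exp_ofReal_mul_I_im]
    ring

lemma sin_sub_ne_zero {θ φ : ℝ} (hθ : θ ∈ Ioo 0 π) (hφ : φ ∈ Ioo 0 π) (h : θ ≠ φ) :
    Real.sin (φ - θ) ≠ 0 := by
  rw [Ne, Real.sin_eq_zero_iff_of_lt_of_lt (by linarith [hθ.2, hφ.1]) (by linarith [hθ.1, hφ.2]),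
    sub_eq_zero]
  exact h.symm

lemma eq_of_ofReal_mul_exp_eq {r s θ φ : ℝ} (hθ : θ ∈ Ioo 0 π) (hφ : φ ∈ Ioo 0 π) (hs : s ≠ 0)
    (h : r * exp (θ * I) = s * exp (φ * I)) : θ = φ := by
  have hr : (r : ℂ) = s * exp ((φ - θ : ℝ) * I) := by
    rw [ofReal_sub, sub_mul, Complex.exp_sub, ← mul_div_assoc, ← h,
      mul_div_cancel_right₀ _ (Complex.exp_ne_zero _)]
  have him : s * Real.sin (φ - θ) = 0 := by
    simpa only [im_ofReal_mul, exp_ofReal_mul_I_im, ofReal_im] using (congrArg im hr).symm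
  by_contra hne
  exact mul_ne_zero hs (sin_sub_ne_zero hθ hφ hne) him

lemma triangleApex_inj {θ φ θ' φ' : ℝ} (hθ : θ ∈ Ioo 0 π) (hφ : φ ∈ Ioo 0 π) (hne : θ ≠ φ)
    (hθ' : θ' ∈ Ioo 0 π) (hφ' : φ' ∈ Ioo 0 π) (hne' : θ' ≠ φ')
    (h : triangleApex θ φ = triangleApex θ' φ') : θ = θ' ∧ φ = φ' := by
  have hs := sin_sub_ne_zero hθ hφ hne
  have hs' := sin_sub_ne_zero hθ' hφ' hne'
  have h₁ := h
  rw [triangleApex_eq_one_add hs, triangleApex_eq_one_add hs', add_right_inj] at h₁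
  exact ⟨eq_of_ofReal_mul_exp_eq hθ hθ' (div_ne_zero (Real.sin_pos_of_mem_Ioo hφ').ne' hs') h,
    eq_of_ofReal_mul_exp_eq hφ hφ' (div_ne_zero (Real.sin_pos_of_mem_Ioo hθ').ne' hs') h₁⟩

/-- The angle to the real axis of the `j`-th line, `j < m`, of a pencil of `m` equally spaced lines
through a point. The offset `τ` describes the rotation of the pencil. -/
noncomputable def pencilAngle (τ : ℝ) (m j : ℕ) : ℝ :=
  π * (j + τ) / m

lemma pencilAngle_mem_Ioo {τ : ℝ} (hτ : τ ∈ Ioo 0 1) {m j : ℕ} (hj : j < m) :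
    pencilAngle τ m j ∈ Ioo 0 π := by
  have hjm : (j : ℝ) + 1 ≤ m := by exact_mod_cast hj
  have hj0 : (0 : ℝ) ≤ j := j.cast_nonneg
  rw [pencilAngle, mul_div_assoc]
  exact ⟨mul_pos Real.pi_pos (div_pos (by linarith [hτ.1, hj0]) (by linarith [hj0])),
    mul_lt_of_lt_one_right Real.pi_pos ((div_lt_one (by linarith [hj0])).2 (by linarith [hτ.2]))⟩

lemma pencilAngle_inj {τ σ : ℝ} (hτ : τ ∈ Ioo 0 1) (hσ : σ ∈ Ioo 0 1) {m j k : ℕ} (hm : m ≠ 0)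
    (h : pencilAngle τ m j = pencilAngle σ m k) : j = k ∧ τ = σ := by
  have hsum : (j : ℝ) + τ = k + σ := by
    simpa [pencilAngle, hm, Real.pi_ne_zero, div_left_inj'] using h
  have hjk : j = k := by
    have hjk : (j : ℝ) < k + 1 := by linarith [hτ.1, hσ.2]
    have hkj : (k : ℝ) < j + 1 := by linarith [hτ.2, hσ.1]
    norm_cast at hjk hkj
    omega
  exact ⟨hjk, by simpa [hjk] using hsum⟩

/-- For `0 < m`, a polynomial whose real part vanishes exactly on the `m` lines through `a` at the
angles `pencilAngle τ m j`. -/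
noncomputable def pencil (a : ℂ) (τ : ℝ) (m : ℕ) : ℂ[X] :=
  C (I * exp (-(π * τ * I))) * (X - C a) ^ m

lemma mul_exp_pencilAngle_pow (τ : ℝ) {m : ℕ} (hm : m ≠ 0) (j : ℕ) :
    I * exp (-(π * τ * I)) * exp (pencilAngle τ m j * I) ^ m = (-1) ^ j * I := by
  have hangle : m * (pencilAngle τ m j * I) = j * (π * I) + π * τ * I := by
    rw [pencilAngle]
    push_cast
    field_simp
  rw [← Complex.exp_nat_mul, hangle, mul_assoc, ← Complex.exp_add, neg_add_cancel_comm_assoc,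
    Complex.exp_nat_mul, exp_pi_mul_I, mul_comm]

lemma eval_pencil (a : ℂ) (τ : ℝ) {m : ℕ} (hm : m ≠ 0) (j : ℕ) (r : ℝ) :
    (pencil a τ m).eval (a + r * exp (pencilAngle τ m j * I)) = ((-1) ^ j * r ^ m : ℝ) * I := by
  simp only [pencil, eval_mul, eval_C, eval_pow, eval_sub, eval_X, add_sub_cancel_left]
  push_cast
  linear_combination (r : ℂ) ^ m * mul_exp_pencilAngle_pow τ hm j

lemma eval_derivative_pencil (a : ℂ) (τ : ℝ) {m : ℕ} (hm : m ≠ 0) (j : ℕ) (r : ℝ) :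
    (pencil a τ m).derivative.eval (a + r * exp (pencilAngle τ m j * I)) =
      (m * (-1) ^ j * r ^ (m - 1) : ℝ) * (I * exp (-(pencilAngle τ m j * I))) := by
  have hpow : I * exp (-(π * τ * I)) * exp (pencilAngle τ m j * I) ^ (m - 1) =
      (-1) ^ j * I * exp (-(pencilAngle τ m j * I)) := by
    rw [← mul_exp_pencilAngle_pow τ hm j, ← pow_sub_one_mul hm, ← mul_assoc,
      mul_assoc _ (exp _) (exp _), ← Complex.exp_add, add_neg_cancel, Complex.exp_zero, mul_one]
  simp only [pencil, derivative_C_mul, derivative_X_sub_C_pow, eval_mul, eval_C, eval_pow, eval_sub,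
    eval_X, add_sub_cancel_left]
  push_cast
  linear_combination (m * (r : ℂ) ^ (m - 1)) * hpow

lemma norm_add_I_mul_ne_norm_sub {a b : ℂ} (h : (a * conj b).im ≠ 0) :
    ‖a + I * b‖ ≠ ‖a - I * b‖ := by
  intro heq
  have hsq := congrArg (· ^ 2) heq
  simp only [Complex.sq_norm, normSq_apply, add_re, add_im, sub_re, sub_im, mul_re, mul_im, I_re,
    I_im, zero_mul, one_mul, zero_sub, zero_add, sub_neg_eq_add] at hsq
  simp only [mul_im, conj_re, conj_im, mul_neg] at h
  exact h (by linarith)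

lemma mem_nondegenerateZeros_of_re_eq_zero {A B : ℂ[X]} {z : ℂ} (hA : (A.eval z).re = 0)
    (hB : (B.eval z).re = 0) (hJ : (A.derivative.eval z * conj (B.derivative.eval z)).im ≠ 0) :
    z ∈ nondegenerateZeros (A + C I * B) (A - C I * B) := by
  refine ⟨?_, ?_⟩
  · apply Complex.ext <;> simp [hA, hB]
  · simpa using norm_add_I_mul_ne_norm_sub hJ

lemma im_mul_conj_I_mul_exp (u v θ φ : ℝ) :
    (u * (I * exp (-(θ * I))) * conj (v * (I * exp (-(φ * I))))).im =
      u * v * Real.sin (φ - θ) := by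
  have hpolar : u * (I * exp (-(θ * I))) * conj (v * (I * exp (-(φ * I)))) =
      (u * v : ℝ) * exp ((φ - θ : ℝ) * I) := by
    simp only [map_mul, conj_ofReal, conj_I, ← exp_conj, map_neg, mul_neg, neg_neg]
    push_cast
    rw [sub_mul, sub_eq_neg_add, Complex.exp_add]
    linear_combination (-u * v * exp (-(θ * I)) * exp (φ * I)) * I_mul_I
  rw [hpolar, im_ofReal_mul, exp_ofReal_mul_I_im]

lemma triangleApex_mem_nondegenerateZeros {τ σ : ℝ} {m j k : ℕ}
    (hθ : pencilAngle τ m j ∈ Ioo 0 π) (hφ : pencilAngle σ m k ∈ Ioo 0 π)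
    (hne : pencilAngle τ m j ≠ pencilAngle σ m k) :
    triangleApex (pencilAngle τ m j) (pencilAngle σ m k) ∈
      nondegenerateZeros (pencil 0 τ m + C I * pencil 1 σ m)
        (pencil 0 τ m - C I * pencil 1 σ m) := by
  have hm : m ≠ 0 := by
    rintro rfl
    simp [pencilAngle] at hθ
  have hsin := sin_sub_ne_zero hθ hφ hne
  have hA := triangleApex_eq_zero_add (pencilAngle τ m j) (pencilAngle σ m k)
  have hB := triangleApex_eq_one_add hsin
  refine mem_nondegenerateZeros_of_re_eq_zero ?_ ?_ ?_
  · rw [hA, eval_pencil _ _ hm, re_ofReal_mul, I_re, mul_zero]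
  · rw [hB, eval_pencil _ _ hm, re_ofReal_mul, I_re, mul_zero]
  · nth_rw 1 [hA]
    rw [hB, eval_derivative_pencil _ _ hm, eval_derivative_pencil _ _ hm, im_mul_conj_I_mul_exp]
    have hsinθ := (Real.sin_pos_of_mem_Ioo hθ).ne'
    have hsinφ := (Real.sin_pos_of_mem_Ioo hφ).ne'
    simp [hm, hsin, hsinθ, hsinφ]

section Degree

variable (a b : ℂ) (τ σ : ℝ) (m : ℕ)

lemma natDegree_pencil_le : (pencil a τ m).natDegree ≤ m := by
  refine (natDegree_C_mul_le _ _).trans ?_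
  rw [natDegree_pow, natDegree_X_sub_C, mul_one]

lemma coeff_pencil : (pencil a τ m).coeff m = I * exp (-(π * τ * I)) := by
  have hmonic := ((monic_X_sub_C a).pow m).coeff_natDegree
  rw [natDegree_pow, natDegree_X_sub_C, mul_one] at hmonic
  rw [pencil, coeff_C_mul, hmonic, mul_one]

lemma natDegree_pencil_add_le : (pencil a τ m + C I * pencil b σ m).natDegree ≤ m :=
  natDegree_add_le_of_degree_le (natDegree_pencil_le a τ m)
    ((natDegree_C_mul_le _ _).trans (natDegree_pencil_le b σ m))

lemma natDegree_pencil_sub (h : Real.sin (π * τ) + Real.cos (π * σ) ≠ 0) :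
    (pencil a τ m - C I * pencil b σ m).natDegree = m := by
  refine natDegree_eq_of_le_of_coeff_ne_zero (natDegree_sub_le_of_le (natDegree_pencil_le a τ m)
    ((natDegree_C_mul_le _ _).trans (natDegree_pencil_le b σ m)) |>.trans_eq (max_self m))
    fun hzero => h ?_
  have hre := congrArg re hzero
  simpa [coeff_pencil, Complex.exp_re, Complex.exp_im] using hre

end Degree

theorem sq_le_Znm {n m : ℕ} (hmn : m < n) : m ^ 2 ≤ Znm n m := by
  have hhalf : (1 / 2 : ℝ) ∈ Ioo 0 1 := by norm_num
  have hquarter : (1 / 4 : ℝ) ∈ Ioo 0 1 := by norm_num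
  have hτ (j : Fin m) := pencilAngle_mem_Ioo hquarter j.2
  have hσ (k : Fin m) := pencilAngle_mem_Ioo hhalf k.2
  have hne (j k : Fin m) : pencilAngle (1 / 4) m j ≠ pencilAngle (1 / 2) m k := fun h => by
    have := (pencilAngle_inj hquarter hhalf j.pos.ne' h).2
    norm_num at this
  let f : Fin m × Fin m ↪ ℂ :=
    { toFun e := triangleApex (pencilAngle (1 / 4) m e.1) (pencilAngle (1 / 2) m e.2)
      inj' e e' h := by
        have hm := e.1.pos.ne'
        obtain ⟨h₁, h₂⟩ := triangleApex_inj (hτ _) (hσ _) (hne _ _) (hτ _) (hσ _) (hne _ _) h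
        exact Prod.ext (Fin.ext (pencilAngle_inj hquarter hquarter hm h₁).1)
          (Fin.ext (pencilAngle_inj hhalf hhalf hm h₂).1) }
  have hdeg : (pencil 0 (1 / 4) m - C I * pencil 1 (1 / 2) m).natDegree = m :=
    natDegree_pencil_sub _ _ _ _ _ <| by
      rw [mul_one_div, mul_one_div, Real.sin_pi_div_four, Real.cos_pi_div_two]
      positivity
  have hcard := card_le_Znm ((natDegree_pencil_add_le 0 1 (1 / 4) (1 / 2) m).trans_lt hmn)
    (hdeg.trans_lt hmn) (S := Finset.univ.map f) (by
      intro z hz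
      obtain ⟨e, -, rfl⟩ := Finset.mem_map.1 hz
      exact triangleApex_mem_nondegenerateZeros (hτ _) (hσ _) (hne _ _))
  rwa [hdeg, Finset.card_map, Finset.card_univ, Fintype.card_prod, Fintype.card_fin, ← sq] at hcard

end

/-- Corollary: if `m = α n + o(n)` with `0 ≤ α ≤ 1`, then
`limsup_{n → ∞} Z(n, m(n)) / n² ≥ α²`. -/
theorem limsup_Znm_div_sq_ge_alpha_sq (α : ℝ) (hα : α ∈ Set.Icc (0 : ℝ) 1)
    (m : ℕ → ℕ) (hm : ∀ n, 0 < n → m n < n)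
    (hlim : Filter.Tendsto (fun n : ℕ => (m n : ℝ) / (n : ℝ)) Filter.atTop (nhds α)) :
    α ^ 2 ≤ Filter.limsup (fun n : ℕ => (Znm n (m n) : ℝ) / (n : ℝ) ^ 2)
      Filter.atTop := by
  have hlower : ∀ᶠ n : ℕ in Filter.atTop,
      ((m n : ℝ) / n) ^ 2 ≤ (Znm n (m n) : ℝ) / (n : ℝ) ^ 2 := by
    filter_upwards [Filter.eventually_gt_atTop 0] with n hn
    rw [div_pow]
    gcongr
    exact_mod_cast sq_le_Znm (hm n hn)
  have hupper : ∀ᶠ n : ℕ in Filter.atTop, (Znm n (m n) : ℝ) / (n : ℝ) ^ 2 ≤ 1 := by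
    filter_upwards [Filter.eventually_gt_atTop 0] with n hn
    exact div_le_one_of_le₀ (by exact_mod_cast Znm_le_sq (hm n hn)) (by positivity)
  calc α ^ 2 = Filter.limsup (fun n : ℕ => ((m n : ℝ) / n) ^ 2) Filter.atTop :=
        (hlim.pow 2).limsup_eq.symm
    _ ≤ _ := Filter.limsup_le_limsup hlower (hlim.pow 2).isCoboundedUnder_le
        (Filter.isBoundedUnder_of_eventually_le hupper)
end

section
/- Let p and q be polynomials with real coefficients of degrees n and m respectively, with n > m, and let h(z) = p(z) + conj(q(z)). If the zero set {z ∈ ℂ : h(z) = 0} has exactly n² elements, then at least n of its elements lie on the coordinate axes, i.e., the set {z : h(z) = 0 and (Re(z) = 0 or Im(z) = 0)} has at least n elements. -/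
/-!
A zero `z` of `h` satisfies `p(z) + q(z̄) = 0` and, after conjugation, `p(z̄) + q(z) = 0`, so
`(z, z̄)` solves a polynomial system in two variables. Subtracting the equations gives
`c(z) = c(z̄)` for `c = p - q`; if `z` is not real, the divided difference of `c`, of degree
`n - 1`, therefore vanishes at `(z, z̄)`.

For the degree-lexicographic order, the leading monomials of the divided difference and of
`p(Y) + q(X)` are `X ^ (n - 1)` and, since `m < n`, `Y ^ n`. By division with remainder the
`(n - 1) * n` monomials divisible by neither span the quotient of the polynomial ring by these two
polynomials, and the common zeros are linearly independent algebra homomorphisms on that quotient.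
So at most `(n - 1) * n` zeros of `h` are off the real axis, and `n ^ 2` zeros leave at least `n`
real ones.
-/

open Polynomial
open MvPolynomial (zeroLocus restrictSupport)
open scoped MonomialOrder

section StandardMonomials

variable {σ ι R : Type*} [CommRing R] (m : MonomialOrder σ) {f : ι → MvPolynomial σ R}

/-- The exponents of the standard monomials of the family `f`: those divisible by no leading
monomial of a member of `f`. -/
def standardExponents (f : ι → MvPolynomial σ R) : Set (σ →₀ ℕ) :=
  {s | ∀ i, ¬ m.degree (f i) ≤ s}

lemma exists_mem_restrictSupport_sub_mem_span (hf : ∀ i, IsUnit (m.leadingCoeff (f i)))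
    (p : MvPolynomial σ R) :
    ∃ r ∈ restrictSupport R (standardExponents m f), p - r ∈ Ideal.span (Set.range f) := by
  obtain ⟨g, r, hp, -, hr⟩ := m.div hf p
  refine ⟨r, hr, ?_⟩
  rw [hp, add_sub_cancel_right, Ideal.span, Finsupp.mem_span_range_iff_exists_finsupp]
  exact ⟨g, rfl⟩

lemma mkₐ_comp_subtype_restrictSupport_surjective (hf : ∀ i, IsUnit (m.leadingCoeff (f i))) :
    Function.Surjective ((Ideal.Quotient.mkₐ R (Ideal.span (Set.range f))).toLinearMap ∘ₗ
      (restrictSupport R (standardExponents m f)).subtype) := by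
  intro a
  obtain ⟨p, rfl⟩ := Ideal.Quotient.mk_surjective a
  obtain ⟨r, hr, hpr⟩ := exists_mem_restrictSupport_sub_mem_span m hf p
  exact ⟨⟨r, hr⟩, (Ideal.Quotient.eq.2 hpr).symm⟩

lemma finite_quotient_span_range (hf : ∀ i, IsUnit (m.leadingCoeff (f i)))
    (hfin : (standardExponents m f).Finite) :
    Module.Finite R (MvPolynomial σ R ⧸ Ideal.span (Set.range f)) := by
  have := hfin.to_subtype
  have := Module.Finite.of_basis (MvPolynomial.basisRestrictSupport R (standardExponents m f))
  exact .of_surjective _ (mkₐ_comp_subtype_restrictSupport_surjective m hf)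

lemma finrank_quotient_span_range_le [Nontrivial R] (hf : ∀ i, IsUnit (m.leadingCoeff (f i)))
    (hfin : (standardExponents m f).Finite) :
    Module.finrank R (MvPolynomial σ R ⧸ Ideal.span (Set.range f)) ≤
      (standardExponents m f).ncard := by
  have := hfin.to_subtype
  have b := MvPolynomial.basisRestrictSupport R (standardExponents m f)
  have := Module.Finite.of_basis b
  rw [← Nat.card_coe_set_eq, ← Module.finrank_eq_nat_card_basis b]
  exact LinearMap.finrank_le_finrank_of_surjective
    (mkₐ_comp_subtype_restrictSupport_surjective m hf)

end StandardMonomials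

section Zeros

variable {σ k K : Type*} [Field k] [Field K] [Algebra k K]

lemma encard_zeroLocus_le_finrank (I : Ideal (MvPolynomial σ k))
    [Module.Finite k (MvPolynomial σ k ⧸ I)] :
    (zeroLocus K I).encard ≤ Module.finrank k (MvPolynomial σ k ⧸ I) := by
  let evalAt (x : zeroLocus K I) : (MvPolynomial σ k ⧸ I) →ₐ[k] K :=
    Ideal.Quotient.liftₐ I (MvPolynomial.aeval x.1) x.2
  have hinj : Function.Injective evalAt := fun x y hxy ↦ Subtype.ext <| funext fun i ↦ by
    have h : MvPolynomial.aeval x.1 (.X i : MvPolynomial σ k) = MvPolynomial.aeval y.1 (.X i) :=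
      DFunLike.congr_fun hxy (Ideal.Quotient.mk I (.X i))
    simpa only [MvPolynomial.aeval_X] using h
  calc (zeroLocus K I).encard
      ≤ ENat.card ((MvPolynomial σ k ⧸ I) →ₐ[k] K) := ENat.card_le_card_of_injective hinj
    _ = Nat.card ((MvPolynomial σ k ⧸ I) →ₐ[k] K) := ENat.card_eq_coe_natCard _
    _ ≤ Module.finrank k (MvPolynomial σ k ⧸ I) := by
      exact_mod_cast card_algHom_le_finrank k (MvPolynomial σ k ⧸ I) K

variable [Fintype σ]

lemma encard_setOf_forall_lt (d : σ → ℕ) :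
    {s : σ →₀ ℕ | ∀ i, s i < d i}.encard = (∏ i, d i : ℕ) := by
  let e : {s : σ →₀ ℕ // ∀ i, s i < d i} ≃ ∀ i, Fin (d i) :=
    (Finsupp.equivFunOnFinite.subtypeEquiv fun _ ↦ Iff.rfl).trans <|
      (Equiv.subtypePiEquivPi (p := fun i n ↦ n < d i)).trans <|
        .piCongrRight fun _ ↦ Fin.equivSubtype.symm
  calc {s : σ →₀ ℕ | ∀ i, s i < d i}.encard
      = ENat.card (∀ i, Fin (d i)) := ENat.card_congr e
    _ = (∏ i, d i : ℕ) := by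
      rw [ENat.card_eq_coe_natCard, Nat.card_pi]
      simp only [Nat.card_fin]

lemma encard_zeroLocus_span_range_le_prod (m : MonomialOrder σ) {f : σ → MvPolynomial σ k}
    {d : σ → ℕ} (hf : ∀ i, f i ≠ 0) (hd : ∀ i, m.degree (f i) = Finsupp.single i (d i)) :
    (zeroLocus K (Ideal.span (Set.range f))).encard ≤ (∏ i, d i : ℕ) := by
  have hunit i : IsUnit (m.leadingCoeff (f i)) := (m.leadingCoeff_ne_zero_iff.2 (hf i)).isUnit
  have hcard : (standardExponents m f).encard = (∏ i, d i : ℕ) := by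
    simpa only [standardExponents, hd, Finsupp.single_le_iff, not_le] using encard_setOf_forall_lt d
  have hfin := Set.finite_of_encard_eq_coe hcard
  have := finite_quotient_span_range m hunit hfin
  calc (zeroLocus K (Ideal.span (Set.range f))).encard
      ≤ Module.finrank k (MvPolynomial σ k ⧸ Ideal.span (Set.range f)) :=
        encard_zeroLocus_le_finrank _
    _ ≤ (standardExponents m f).ncard := by
        exact_mod_cast finrank_quotient_span_range_le m hunit hfin
    _ = (∏ i, d i : ℕ) := hfin.cast_ncard_eq.trans hcard

end Zeros

section LeadingMonomials

variable {σ R : Type*}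

lemma toMvPolynomial_eq_sum_monomial [CommSemiring R] (p : R[X]) (i : σ) :
    p.toMvPolynomial i =
      ∑ k ∈ Finset.range (p.natDegree + 1),
        MvPolynomial.monomial (Finsupp.single i k) (p.coeff k) := by
  simp [Polynomial.toMvPolynomial, aeval_eq_sum_range, MvPolynomial.X_pow_eq_monomial,
    MvPolynomial.smul_monomial]

lemma degree_toMvPolynomial [CommSemiring R] (m : MonomialOrder σ) (p : R[X]) (i : σ) :
    m.degree (p.toMvPolynomial i) = Finsupp.single i p.natDegree := by
  classical
  obtain rfl | hp := eq_or_ne p 0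
  · simp
  refine m.toSyn.injective (le_antisymm ?_ (m.le_degree ?_))
  · rw [toMvPolynomial_eq_sum_monomial]
    refine m.degree_sum_le.trans (Finset.sup_le fun k hk ↦ (m.degree_monomial_le _).trans ?_)
    exact m.toSyn_monotone (Finsupp.single_mono (Finset.mem_range_succ_iff.1 hk))
  · simp [toMvPolynomial_eq_sum_monomial, MvPolynomial.coeff_sum, MvPolynomial.coeff_monomial,
      (Finsupp.single_injective i).eq_iff, hp]

lemma degLex_degree_toMvPolynomial_add [CommSemiring R] [LinearOrder σ] [WellFoundedGT σ]
    {p q : R[X]} (h : q.natDegree < p.natDegree) (i j : σ) :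
    MonomialOrder.degLex.degree (p.toMvPolynomial i + q.toMvPolynomial j) =
      Finsupp.single i p.natDegree := by
  rw [MonomialOrder.degree_add_of_lt, degree_toMvPolynomial]
  simp only [degree_toMvPolynomial, MonomialOrder.degLex_lt_iff, Finsupp.DegLex.lt_iff,
    ofDegLex_toDegLex, Finsupp.degree_single]
  exact Or.inl h

lemma toSyn_single_lt_single (m : MonomialOrder σ) {i j : σ}
    (hij : Finsupp.single j 1 ≺[m] Finsupp.single i 1) {n : ℕ} (hn : n ≠ 0) :
    Finsupp.single j n ≺[m] Finsupp.single i n := by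
  have hsmul (l : σ) : Finsupp.single l n = n • Finsupp.single l 1 := by simp
  simpa only [hsmul, map_nsmul] using nsmul_lt_nsmul_right hn hij

variable [CommRing R]

lemma degree_toMvPolynomial_sub_toMvPolynomial (m : MonomialOrder σ) {p : R[X]}
    (hp : p.natDegree ≠ 0) {i j : σ} (hij : Finsupp.single j 1 ≺[m] Finsupp.single i 1) :
    m.degree (p.toMvPolynomial i - p.toMvPolynomial j) = Finsupp.single i p.natDegree := by
  rw [m.degree_sub_of_lt, degree_toMvPolynomial]
  simpa only [degree_toMvPolynomial] using toSyn_single_lt_single m hij hp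

end LeadingMonomials

section DividedDifference

variable {σ R : Type*} [CommRing R]

/-- The divided difference `(p(Xᵢ) - p(Xⱼ)) / (Xᵢ - Xⱼ)` of a univariate polynomial, defined without
division by expanding `(Xᵢ ^ k - Xⱼ ^ k) / (Xᵢ - Xⱼ)` as a geometric sum. -/
noncomputable def dividedDifference (p : R[X]) (i j : σ) : MvPolynomial σ R :=
  ∑ k ∈ Finset.range (p.natDegree + 1),
    p.coeff k • ∑ l ∈ Finset.range k, .X i ^ l * .X j ^ (k - 1 - l)

lemma dividedDifference_mul_X_sub_X (p : R[X]) (i j : σ) :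
    dividedDifference p i j * (.X i - .X j) = p.toMvPolynomial i - p.toMvPolynomial j := by
  simp only [dividedDifference, Polynomial.toMvPolynomial, aeval_eq_sum_range, Finset.sum_mul,
    smul_mul_assoc, ← Finset.sum_sub_distrib, ← smul_sub]
  simp only [← Finset.sum_mul, geom_sum₂_mul]

lemma eval_dividedDifference_eq_zero [NoZeroDivisors R] {p : R[X]} {i j : σ} {x : σ → R}
    (hx : x i ≠ x j) (hp : p.eval (x i) = p.eval (x j)) :
    MvPolynomial.eval x (dividedDifference p i j) = 0 := by
  have h := congrArg (MvPolynomial.eval x) (dividedDifference_mul_X_sub_X p i j)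
  simp only [map_mul, map_sub, MvPolynomial.eval_X, MvPolynomial.eval_toMvPolynomial, hp,
    sub_self] at h
  exact (mul_eq_zero_iff_right (sub_ne_zero.2 hx)).1 h

lemma dividedDifference_ne_zero (m : MonomialOrder σ) {p : R[X]} (hp : p.natDegree ≠ 0)
    {i j : σ} (hij : Finsupp.single j 1 ≺[m] Finsupp.single i 1) :
    dividedDifference p i j ≠ 0 := by
  intro h
  have hdeg := degree_toMvPolynomial_sub_toMvPolynomial m hp hij
  rw [← dividedDifference_mul_X_sub_X, h, zero_mul, m.degree_zero, eq_comm,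
    Finsupp.single_eq_zero] at hdeg
  exact hp hdeg

lemma degree_dividedDifference (m : MonomialOrder σ) {p : R[X]} (hp : p.natDegree ≠ 0)
    {i j : σ} (hij : Finsupp.single j 1 ≺[m] Finsupp.single i 1) :
    m.degree (dividedDifference p i j) = Finsupp.single i (p.natDegree - 1) := by
  nontriviality R
  have hlt : m.degree (.X j : MvPolynomial σ R) ≺[m] m.degree (.X i : MvPolynomial σ R) := by
    simpa only [m.degree_X] using hij
  have hmonic : m.leadingCoeff (.X i - .X j : MvPolynomial σ R) = 1 :=
    (m.leadingCoeff_sub_of_lt hlt).trans m.leadingCoeff_X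
  have hdeg := degree_toMvPolynomial_sub_toMvPolynomial m hp hij
  rw [← dividedDifference_mul_X_sub_X, m.degree_mul_of_isRegular_right
    (dividedDifference_ne_zero m hp hij) (hmonic ▸ isRegular_one), m.degree_sub_of_lt hlt,
    m.degree_X, ← Nat.sub_add_cancel (Nat.one_le_iff_ne_zero.2 hp), Finsupp.single_add] at hdeg
  exact add_right_cancel hdeg

end DividedDifference

lemma encard_off_diagonal_zeros_le {K : Type*} [Field K] {p q : K[X]}
    (h : q.natDegree < p.natDegree) :
    {x : Fin 2 → K | x 0 ≠ x 1 ∧ p.eval (x 0) + q.eval (x 1) = 0 ∧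
      p.eval (x 1) + q.eval (x 0) = 0}.encard ≤ ((p.natDegree - 1) * p.natDegree : ℕ) := by
  let f : Fin 2 → MvPolynomial (Fin 2) K :=
    ![dividedDifference (p - q) 0 1, p.toMvPolynomial 1 + q.toMvPolynomial 0]
  have hX : Finsupp.single 1 1 ≺[MonomialOrder.degLex] Finsupp.single (0 : Fin 2) 1 :=
    MonomialOrder.degLex_single_lt_iff.2 zero_lt_one
  have hpq : (p - q).natDegree = p.natDegree := natDegree_sub_eq_left_of_natDegree_lt h
  have hpq0 : (p - q).natDegree ≠ 0 := hpq ▸ h.ne_bot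
  have hdeg0 : MonomialOrder.degLex.degree (f 0) = Finsupp.single 0 (p.natDegree - 1) :=
    hpq ▸ degree_dividedDifference _ hpq0 hX
  have hdeg1 : MonomialOrder.degLex.degree (f 1) = Finsupp.single 1 p.natDegree :=
    degLex_degree_toMvPolynomial_add h 1 0
  have hf0 : f 0 ≠ 0 := dividedDifference_ne_zero _ hpq0 hX
  have hf1 : f 1 ≠ 0 := MonomialOrder.degLex.ne_zero_of_degree_ne_zero <| by
    rw [hdeg1]
    exact Finsupp.single_ne_zero.2 h.ne_bot
  have hbezout : (zeroLocus K (Ideal.span (Set.range f))).encard ≤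
      ((p.natDegree - 1) * p.natDegree : ℕ) := by
    simpa using encard_zeroLocus_span_range_le_prod (K := K) (d := ![p.natDegree - 1, p.natDegree])
      MonomialOrder.degLex (Fin.forall_fin_two.2 ⟨hf0, hf1⟩) (Fin.forall_fin_two.2 ⟨hdeg0, hdeg1⟩)
  refine (Set.encard_le_encard ?_).trans hbezout
  rintro x ⟨hne, h01, h10⟩
  rw [MvPolynomial.zeroLocus_span]
  refine Set.forall_mem_range.2 (Fin.forall_fin_two.2 ⟨?_, ?_⟩)
  · refine eval_dividedDifference_eq_zero hne ?_
    rw [eval_sub, eval_sub]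
    linear_combination h01 - h10
  · simpa [f, MvPolynomial.aeval_eq_eval, MvPolynomial.eval_toMvPolynomial] using h10

lemma star_eval_of_isSelfAdjoint_coeff {R : Type*} [CommSemiring R] [StarRing R] {p : R[X]}
    (hp : ∀ k, IsSelfAdjoint (p.coeff k)) (z : R) : star (p.eval z) = p.eval (star z) := by
  have hmap : p.map (starRingEnd R) = p := by
    ext k
    rw [coeff_map]
    exact hp k
  nth_rw 2 [← hmap]
  rw [eval_map]
  exact hom_eval₂ p (RingHom.id R) (starRingEnd R) z

lemma encard_zeros_not_isSelfAdjoint_le {K : Type*} [Field K] [StarRing K] {p q : K[X]}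
    (hp : ∀ k, IsSelfAdjoint (p.coeff k)) (hq : ∀ k, IsSelfAdjoint (q.coeff k))
    (h : q.natDegree < p.natDegree) :
    {z | p.eval z + star (q.eval z) = 0 ∧ ¬ IsSelfAdjoint z}.encard ≤
      ((p.natDegree - 1) * p.natDegree : ℕ) := by
  refine (Set.encard_le_encard_of_injOn (f := fun z ↦ ![z, star z]) ?_
    fun z _ w _ hzw ↦ (Matrix.vecCons_inj.1 hzw).1).trans (encard_off_diagonal_zeros_le h)
  rintro z ⟨hz, hne⟩
  have hstar : p.eval (star z) + q.eval z = 0 := by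
    simpa only [star_add, star_star, star_eval_of_isSelfAdjoint_coeff hp, star_zero] using
      congrArg star hz
  rw [star_eval_of_isSelfAdjoint_coeff hq] at hz
  exact ⟨Ne.symm hne, hz, hstar⟩

theorem maximal_zeros_on_axes_general (p q : ℂ[X])
    (hpreal : ∀ k, (p.coeff k).im = 0) (hqreal : ∀ k, (q.coeff k).im = 0)
    (hdeg : q.natDegree < p.natDegree) :
    {z : ℂ | p.eval z + (starRingEnd ℂ) (q.eval z) = 0}.ncard + p.natDegree ≤
      p.natDegree ^ 2 +
        {z : ℂ | p.eval z + (starRingEnd ℂ) (q.eval z) = 0 ∧ z.im = 0}.ncard := by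
  set Z := {z : ℂ | p.eval z + (starRingEnd ℂ) (q.eval z) = 0}
  have hnonreal : {z | z ∈ Z ∧ z.im ≠ 0}.ncard ≤ (p.natDegree - 1) * p.natDegree := by
    have hfix (z : ℂ) : IsSelfAdjoint z ↔ z.im = 0 := Complex.conj_eq_iff_im
    simp only [← hfix, ne_eq] at hpreal hqreal ⊢
    exact (Set.encard_le_coe_iff_finite_ncard_le.1
      (encard_zeros_not_isSelfAdjoint_le hpreal hqreal hdeg)).2
  have hsplit : Z.ncard ≤ {z | z ∈ Z ∧ z.im = 0}.ncard + {z | z ∈ Z ∧ z.im ≠ 0}.ncard := by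
    convert Set.ncard_union_le _ _
    ext z
    simp [← and_or_left, em]
  have hsq : (p.natDegree - 1) * p.natDegree + p.natDegree = p.natDegree ^ 2 := by
    rw [← Nat.succ_mul, Nat.succ_eq_add_one, Nat.sub_add_cancel (Nat.one_le_of_lt hdeg), sq]
  change _ ≤ _ + {z | z ∈ Z ∧ z.im = 0}.ncard
  omega

/-- A harmonic polynomial with real coefficients attaining the maximal number
`n²` of zeros must have at least `n` zeros on the coordinate axes. -/
theorem maximal_zeros_on_axes
    (n m : ℕ) (p q : Polynomial ℂ)
    (hpreal : ∀ k, (p.coeff k).im = 0) (hqreal : ∀ k, (q.coeff k).im = 0)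
    (hp : p.natDegree = n) (hq : q.natDegree = m) (hnm : m < n)
    (hfin : {z : ℂ | p.eval z + (starRingEnd ℂ) (q.eval z) = 0}.Finite)
    (hcard : {z : ℂ | p.eval z + (starRingEnd ℂ) (q.eval z) = 0}.ncard = n ^ 2) :
    n ≤ {z : ℂ | p.eval z + (starRingEnd ℂ) (q.eval z) = 0 ∧
      (z.re = 0 ∨ z.im = 0)}.ncard := by
  have hreal := maximal_zeros_on_axes_general p q hpreal hqreal (hp ▸ hq ▸ hnm)
  rw [hcard, hp, add_le_add_iff_left] at hreal
  exact hreal.trans <| Set.ncard_le_ncard (fun z hz ↦ ⟨hz.1, .inr hz.2⟩)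
    (hfin.subset fun z hz ↦ hz.1)
end
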